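/- Let G be the semidirect product (ZMod 5)² ⋊ SL(2, ZMod 5), where SL(2, ZMod 5) acts on (ZMod 5)² by matrix-vector multiplication. Then G has exactly 14 conjugacy classes. -/

import Mathlib

open Matrix

/-- The action of `SL(2, ZMod p)` on `(ZMod p)²` (written multiplicatively) by
matrix-vector multiplication, as a homomorphism into the automorphism group. -/
noncomputable def slAction (p : ℕ) [Fact p.Prime] :
    Matrix.SpecialLinearGroup (Fin 2) (ZMod p) →*
      MulAut (Multiplicative (Fin 2 → ZMod p)) where
  toFun A := AddEquiv.toMultiplicative
    (Matrix.SpecialLinearGroup.toLin' A).toAddEquiv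
  map_one' := by
    ext x
    simp only [_root_.map_one]
    rfl
  map_mul' A B := by
    ext x
    simp only [_root_.map_mul]
    rfl

/-- The semidirect product `(ZMod p)² ⋊ SL(2, ZMod p)`. -/
noncomputable def SemidirectGroup (p : ℕ) [Fact p.Prime] :=
  SemidirectProduct (Multiplicative (Fin 2 → ZMod p))
    (Matrix.SpecialLinearGroup (Fin 2) (ZMod p)) (slAction p)

noncomputable instance (p : ℕ) [Fact p.Prime] : Group (SemidirectGroup p) :=
  inferInstanceAs (Group (SemidirectProduct _ _ _))

instance : Fact (Nat.Prime 5) := ⟨by norm_num⟩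

/-!
Regard the group as the group of affine maps `w ↦ F w + v` of the plane over `ZMod p`, `p` an odd
prime. A map with a fixed point is conjugate to its linear part, and two linear maps are conjugate
in the affine group exactly when they are conjugate in `SL₂`. A map without fixed points has a
linear part with eigenvalue `1` and is conjugate to exactly one map `w ↦ (1, 0; δ, 1) w + (1, 0)`,
so these contribute `p` further classes.

Over a finite field of odd order `q`, the noncentral elements `F` of `SL₂` of trace `t` are
classified by the values of the binary form `v ↦ det (v, F v)`, whose discriminant is `t² - 4`. If
`t² ≠ 4` the form is universal and there is one class; if `t = ±2` it is a multiple of the square of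
a linear form, and there are two. Together with the centre this makes `(q - 2) + 4 + 2 = q + 4`
classes, hence `2 p + 4` in the affine group.
-/

open MatrixGroups

section SemidirectProduct

variable {N G : Type*} [Group N] [Group G] {φ : G →* MulAut N}

theorem semidirectProduct_isConj_iff {a b : N ⋊[φ] G} :
    IsConj a b ↔ ∃ (n : N) (g : G), n * φ g a.left = b.left * φ b.right n ∧
      g * a.right = b.right * g := by
  simp only [isConj_iff, mul_inv_eq_iff_eq_mul, SemidirectProduct.ext_iff,
    SemidirectProduct.mul_left, SemidirectProduct.mul_right]
  exact ⟨fun ⟨c, hc⟩ ↦ ⟨c.left, c.right, hc⟩, fun ⟨n, g, h⟩ ↦ ⟨⟨n, g⟩, h⟩⟩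

theorem conjClasses_map_inr_injective :
    Function.Injective (ConjClasses.map (SemidirectProduct.inr : G →* N ⋊[φ] G)) := by
  rintro ⟨g⟩ ⟨h⟩ hgh
  exact ConjClasses.mk_eq_mk_iff_isConj.2 <| by
    simpa using SemidirectProduct.rightHom.map_isConj (ConjClasses.mk_eq_mk_iff_isConj.1 hgh)

end SemidirectProduct

section CommRing

variable {R : Type*} [CommRing R]

/-- The binary quadratic form `v ↦ det (v, A v)` of a `2 × 2` matrix `A`. Up to the determinant of
the conjugating matrix it is a conjugacy invariant, and `v` is a cyclic vector for `A` exactly when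
its value at `v` is a unit. The vectors `v` and `A v` are encoded as rows. -/
def krylovForm (A : Matrix (Fin 2) (Fin 2) R) (v : Fin 2 → R) : R :=
  (Matrix.of ![v, A *ᵥ v]).det

theorem krylovForm_eq (A : Matrix (Fin 2) (Fin 2) R) (v : Fin 2 → R) :
    krylovForm A v = A 1 0 * v 0 ^ 2 + (A 1 1 - A 0 0) * v 0 * v 1 - A 0 1 * v 1 ^ 2 := by
  simp only [krylovForm, det_fin_two, of_apply, cons_val_zero, cons_val_one, mulVec, dotProduct,
    Fin.sum_univ_two]
  ring

theorem krylovForm_mulVec {A B P : Matrix (Fin 2) (Fin 2) R} (h : P * A = B * P)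
    (v : Fin 2 → R) : krylovForm B (P *ᵥ v) = P.det * krylovForm A v := by
  have hrows : Matrix.of ![P *ᵥ v, B *ᵥ P *ᵥ v] = Matrix.of ![v, A *ᵥ v] * Pᵀ := by
    rw [mulVec_mulVec, ← h, ← mulVec_mulVec]
    ext i j
    fin_cases i <;> fin_cases j <;> simp [mul_apply] <;> ring
  rw [krylovForm, hrows, det_mul, det_transpose, mul_comm, krylovForm]

theorem exists_krylovForm_ne_zero {A : Matrix (Fin 2) (Fin 2) R}
    (hA : ∀ r, A ≠ scalar (Fin 2) r) : ∃ v, krylovForm A v ≠ 0 := by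
  by_contra! h
  have h₁ : A 1 0 = 0 := by simpa [krylovForm_eq] using h ![1, 0]
  have h₂ : A 0 1 = 0 := by simpa [krylovForm_eq] using h ![0, 1]
  have h₃ : A 1 1 = A 0 0 := by simpa [krylovForm_eq, h₁, h₂, sub_eq_zero] using h ![1, 1]
  refine hA (A 0 0) (ext fun i j ↦ ?_)
  fin_cases i <;> fin_cases j <;> simp [h₁, h₂, h₃]

theorem specialLinearGroup_isConj_iff {n : Type*} [Fintype n] [DecidableEq n]
    {A B : Matrix.SpecialLinearGroup n R} :
    IsConj A B ↔ ∃ P : Matrix.SpecialLinearGroup n R, P.1 * A.1 = B.1 * P.1 := by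
  simp only [isConj_iff, mul_inv_eq_iff_eq_mul]
  exact exists_congr fun P ↦ Subtype.ext_iff

theorem specialLinearGroup_trace_eq_of_isConj {n : Type*} [Fintype n] [DecidableEq n]
    {A B : Matrix.SpecialLinearGroup n R} (h : IsConj A B) : A.1.trace = B.1.trace := by
  obtain ⟨P, rfl⟩ := isConj_iff.1 h
  rw [Matrix.SpecialLinearGroup.coe_mul, trace_mul_comm, ← Matrix.SpecialLinearGroup.coe_mul,
    inv_mul_cancel_left]

/-- The matrix of a determinant one map `F` of trace `t` in the basis `v, δ⁻¹ F v`, where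
`δ = det (v, F v)`; rescaling the second vector makes the basis unimodular. For `δ = 1` this is
the usual companion matrix. -/
def scaledCompanion (t : R) (δ : Rˣ) : SL(2, R) :=
  ⟨!![0, -↑δ⁻¹; ↑δ, t], by simp [det_fin_two_of]⟩

theorem coe_scaledCompanion (t : R) (δ : Rˣ) :
    (scaledCompanion t δ).1 = !![0, -↑δ⁻¹; ↑δ, t] := rfl

theorem trace_scaledCompanion (t : R) (δ : Rˣ) :
    (scaledCompanion t δ).1.trace = t := by
  simp [coe_scaledCompanion, trace_fin_two_of]

theorem krylovForm_scaledCompanion (t : R) (δ : Rˣ) (v : Fin 2 → R) :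
    krylovForm (scaledCompanion t δ).1 v =
      δ * v 0 ^ 2 + t * v 0 * v 1 + ↑δ⁻¹ * v 1 ^ 2 := by
  simp [krylovForm_eq, coe_scaledCompanion]

theorem scaledCompanion_notMem_center [Nontrivial R] (t : R) (δ : Rˣ) :
    scaledCompanion t δ ∉ Subgroup.center SL(2, R) := by
  rw [Matrix.SpecialLinearGroup.mem_center_iff]
  rintro ⟨r, -, hr⟩
  exact δ.ne_zero (by simpa [coe_scaledCompanion] using (congrFun₂ hr 1 0).symm)

theorem isConj_scaledCompanion_iff {F : SL(2, R)} {t : R} {δ : Rˣ} :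
    IsConj (scaledCompanion t δ) F ↔
      F.1.trace = t ∧ ∃ v, krylovForm F.1 v = δ := by
  constructor
  · intro h
    refine ⟨by rw [← specialLinearGroup_trace_eq_of_isConj h, trace_scaledCompanion], ?_⟩
    obtain ⟨P, hP⟩ := specialLinearGroup_isConj_iff.1 h
    refine ⟨P.1 *ᵥ ![1, 0], ?_⟩
    rw [krylovForm_mulVec hP, P.2, krylovForm_scaledCompanion]
    simp
  · rintro ⟨ht, v, hv⟩
    have hdet : F.1 0 0 * F.1 1 1 - F.1 0 1 * F.1 1 0 = 1 := det_fin_two F.1 ▸ F.2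
    have hδ : (↑δ⁻¹ : R) * δ = 1 := δ.inv_mul
    rw [trace_fin_two] at ht
    rw [krylovForm_eq] at hv
    let P : SL(2, R) := ⟨!![v 0, ↑δ⁻¹ * (F.1 0 0 * v 0 + F.1 0 1 * v 1);
      v 1, ↑δ⁻¹ * (F.1 1 0 * v 0 + F.1 1 1 * v 1)], by
        rw [det_fin_two_of]
        linear_combination (↑δ⁻¹ : R) * hv + hδ⟩
    refine specialLinearGroup_isConj_iff.2 ⟨P, Matrix.ext fun i j ↦ ?_⟩
    fin_cases i <;> fin_cases j <;>
      simp only [P, coe_scaledCompanion, mul_apply, Fin.sum_univ_two, of_apply, cons_val',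
        cons_val_zero, cons_val_one, cons_val_fin_one, Fin.isValue, Fin.zero_eta, Fin.mk_one,
        mul_zero, zero_add, mul_neg]
    · linear_combination (F.1 0 0 * v 0 + F.1 0 1 * v 1) * hδ
    · linear_combination (↑δ⁻¹ * v 0 : R) * hdet -
        (↑δ⁻¹ * (F.1 0 0 * v 0 + F.1 0 1 * v 1) : R) * ht
    · linear_combination (F.1 1 0 * v 0 + F.1 1 1 * v 1) * hδ
    · linear_combination (↑δ⁻¹ * v 1 : R) * hdet -
        (↑δ⁻¹ * (F.1 1 0 * v 0 + F.1 1 1 * v 1) : R) * ht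

theorem isConj_scaledCompanion_iff_isSquare {s : R} (hs : s ^ 2 = 1) {δ ε : Rˣ} :
    IsConj (scaledCompanion (2 * s) δ) (scaledCompanion (2 * s) ε) ↔ IsSquare (ε * δ : R) := by
  have hsq (v : Fin 2 → R) : ε * krylovForm (scaledCompanion (2 * s) ε).1 v =
      (ε * v 0 + s * v 1) ^ 2 := by
    rw [krylovForm_scaledCompanion]
    linear_combination v 1 ^ 2 * ε.mul_inv - v 1 ^ 2 * hs
  rw [isConj_scaledCompanion_iff, and_iff_right (trace_scaledCompanion _ _)]
  constructor
  · rintro ⟨v, hv⟩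
    exact ⟨_, by rw [← hv, hsq, sq]⟩
  · rintro ⟨r, hr⟩
    refine ⟨![↑ε⁻¹ * r, 0], ε.isUnit.mul_left_cancel ?_⟩
    simp [hsq, hr, sq]

end CommRing

section FiniteField

variable {K : Type*} [Field K]

theorem exists_isConj_scaledCompanion {F : SL(2, K)} (hF : F ∉ Subgroup.center SL(2, K)) :
    ∃ (t : K) (δ : Kˣ), IsConj (scaledCompanion t δ) F := by
  have hscalar (r : K) : (F : Matrix (Fin 2) (Fin 2) K) ≠ scalar (Fin 2) r := fun hr ↦
    hF <| Matrix.SpecialLinearGroup.mem_center_iff.2 ⟨r, by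
    simpa [hr] using F.2, hr.symm⟩
  obtain ⟨v, hv⟩ := exists_krylovForm_ne_zero hscalar
  exact ⟨_, Units.mk0 _ hv, isConj_scaledCompanion_iff.2 ⟨rfl, v, rfl⟩⟩

theorem card_center_specialLinearGroup_fin_two (hK : ringChar K ≠ 2) :
    Nat.card (Subgroup.center SL(2, K)) = 2 := by
  rw [Nat.card_congr (Matrix.SpecialLinearGroup.center_equiv_rootsOfUnity' (0 : Fin 2)).toEquiv,
    Fintype.card_fin, (IsPrimitiveRoot.neg_one (ringChar K) hK).card_rootsOfUnity]

/-- Representatives of the conjugacy classes of `SL(2, K)`, for a nonsquare `ε` in a finite field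
`K` of odd characteristic. The centre consists of `±1`; the last family, in which `s = ±1`,
accounts for the second class of noncentral elements of trace `±2`. -/
def slClassRep (ε : Kˣ) : Subgroup.center SL(2, K) ⊕ K ⊕ rootsOfUnity 2 K → ConjClasses SL(2, K) :=
  Sum.elim (fun z ↦ ConjClasses.mk z) <|
    Sum.elim (fun t ↦ ConjClasses.mk (scaledCompanion t 1))
      (fun s ↦ ConjClasses.mk (scaledCompanion (2 * (s : Kˣ)) ε))

theorem slClassRep_injective (hK : ringChar K ≠ 2) {ε : Kˣ} (hε : ¬IsSquare (ε : K)) :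
    Function.Injective (slClassRep ε) := by
  have htrace {t u : K} {δ δ' : Kˣ} (h : ConjClasses.mk (scaledCompanion t δ) =
      ConjClasses.mk (scaledCompanion u δ')) : t = u := by
    simpa only [trace_scaledCompanion] using
      specialLinearGroup_trace_eq_of_isConj (ConjClasses.mk_eq_mk_iff_isConj.1 h)
  have hcenter (z : Subgroup.center SL(2, K)) (t : K) (δ : Kˣ) :
      ConjClasses.mk (z : SL(2, K)) ≠ ConjClasses.mk (scaledCompanion t δ) := fun h ↦ by
    obtain ⟨P, hP⟩ := isConj_iff.1 (ConjClasses.mk_eq_mk_iff_isConj.1 h)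
    rw [Subgroup.mem_center_iff.1 z.2 P, mul_inv_cancel_right] at hP
    exact scaledCompanion_notMem_center t δ (hP ▸ z.2)
  refine .sumElim ?_ (.sumElim (fun t u h ↦ htrace h) ?_ ?_) ?_
  · exact fun z w h ↦ Subtype.ext ((ConjClasses.mk_bijOn SL(2, K)).injOn z.2 w.2 h)
  · exact fun s s' h ↦ Subtype.ext <| Units.ext <|
      mul_left_cancel₀ (Ring.two_ne_zero hK) (htrace h)
  · intro t s h
    obtain rfl := htrace h
    have hs : ((s : Kˣ) : K) ^ 2 = 1 := by
      simpa using congrArg Units.val ((mem_rootsOfUnity 2 (s : Kˣ)).1 s.2)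
    have := (isConj_scaledCompanion_iff_isSquare hs).1 (ConjClasses.mk_eq_mk_iff_isConj.1 h)
    exact hε (by simpa using this)
  · rintro z (t | s)
    exacts [hcenter z _ _, hcenter z _ _]

variable [Finite K]

theorem finiteField_isSquare_or_isSquare_mul {ε : K} (hε : ¬IsSquare ε) (a : K) :
    IsSquare a ∨ IsSquare (ε * a) := by
  classical
  have := Fintype.ofFinite K
  by_contra! h
  simp only [← quadraticChar_neg_one_iff_not_isSquare, map_mul] at hε h
  rw [hε, h.1] at h
  norm_num at h

theorem isConj_scaledCompanion_of_sq_ne_four (hK : ringChar K ≠ 2) {t : K} (ht : t ^ 2 ≠ 4)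
    (δ ε : Kˣ) : IsConj (scaledCompanion t δ) (scaledCompanion t ε) := by
  have := Fintype.ofFinite K
  have h2 : (2 : K) ≠ 0 := Ring.two_ne_zero hK
  open Polynomial in
  obtain ⟨x, y, hxy⟩ : ∃ x y : K, x ^ 2 + ((4 - t ^ 2) * y ^ 2 - 4 * ε * δ) = 0 := by
    have hf : (X ^ 2 : K[X]).degree = 2 := degree_X_pow 2
    have hg : (C (4 - t ^ 2) * X ^ 2 + C 0 * X + C (-(4 * ε * δ : K))).degree = 2 :=
      degree_quadratic (sub_ne_zero.2 ht.symm)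
    obtain ⟨x, y, hxy⟩ := FiniteField.exists_root_sum_quadratic hf hg
      (FiniteField.odd_card_of_char_ne_two hK)
    exact ⟨x, y, by simpa [sub_eq_add_neg] using hxy⟩
  -- The form `Q` of `scaledCompanion t ε` satisfies `4 ε Q (x, y) = (2 ε x + t y)² + (4 - t²) y²`.
  refine isConj_scaledCompanion_iff.2
    ⟨trace_scaledCompanion t ε, ![(x - t * y) / (2 * ε), y], ?_⟩
  rw [krylovForm_scaledCompanion]
  have hε := ε.ne_zero
  simp only [cons_val_zero, cons_val_one, Units.val_inv_eq_inv_val]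
  field_simp
  linear_combination hxy

theorem exists_isConj_scaledCompanion_one_or (hK : ringChar K ≠ 2) {ε : Kˣ}
    (hε : ¬IsSquare (ε : K)) {F : SL(2, K)} (hF : F ∉ Subgroup.center SL(2, K)) :
    (∃ t : K, IsConj (scaledCompanion t 1) F) ∨
      ∃ s : rootsOfUnity 2 K, IsConj (scaledCompanion (2 * (s : Kˣ) : K) ε) F := by
  obtain ⟨t, δ, hF⟩ := exists_isConj_scaledCompanion hF
  by_cases ht : t ^ 2 = 4
  · have h2 : (2 : K) ≠ 0 := Ring.two_ne_zero hK
    obtain ⟨s, rfl⟩ : ∃ s, t = 2 * s := ⟨t / 2, by field_simp⟩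
    have hs : s ^ 2 = 1 := mul_left_cancel₀ (pow_ne_zero 2 h2) (by linear_combination ht)
    rcases finiteField_isSquare_or_isSquare_mul hε δ with hδ | hδ
    · exact .inl ⟨_, ((isConj_scaledCompanion_iff_isSquare hs).2 (by simpa using hδ)).trans hF⟩
    · refine .inr ⟨rootsOfUnity.mkOfPowEq s hs, ?_⟩
      exact ((isConj_scaledCompanion_iff_isSquare hs).2 (by rwa [mul_comm])).trans hF
  · exact .inl ⟨t, (isConj_scaledCompanion_of_sq_ne_four hK ht 1 δ).trans hF⟩

theorem slClassRep_surjective (hK : ringChar K ≠ 2) {ε : Kˣ} (hε : ¬IsSquare (ε : K)) :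
    Function.Surjective (slClassRep ε) := by
  rintro ⟨F⟩
  by_cases hF : F ∈ Subgroup.center SL(2, K)
  · exact ⟨.inl ⟨F, hF⟩, rfl⟩
  · rcases exists_isConj_scaledCompanion_one_or hK hε hF with ⟨t, h⟩ | ⟨s, h⟩
    · exact ⟨.inr (.inl t), ConjClasses.mk_eq_mk_iff_isConj.2 h⟩
    · exact ⟨.inr (.inr s), ConjClasses.mk_eq_mk_iff_isConj.2 h⟩

theorem card_conjClasses_specialLinearGroup_fin_two (hK : ringChar K ≠ 2) :
    Nat.card (ConjClasses SL(2, K)) = Nat.card K + 4 := by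
  obtain ⟨a, ha⟩ := FiniteField.exists_nonsquare hK
  have ha₀ : a ≠ 0 := fun h ↦ ha (h ▸ .zero)
  have hbij : Function.Bijective (slClassRep (Units.mk0 a ha₀)) :=
    ⟨slClassRep_injective hK ha, slClassRep_surjective hK ha⟩
  rw [← Nat.card_eq_of_bijective _ hbij, Nat.card_sum, Nat.card_sum,
    card_center_specialLinearGroup_fin_two hK,
    (IsPrimitiveRoot.neg_one (ringChar K) hK).card_rootsOfUnity]
  ring

end FiniteField

section Transvection

variable {R : Type*} [CommRing R]

/-- The transvection `(1, 0; δ, 1)`; these form the group of unimodular maps `F` for which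
`F - 1` maps into the line spanned by `(0, 1)`. -/
abbrev lowerTransvection (δ : R) : SL(2, R) :=
  Matrix.SpecialLinearGroup.transvection (i := 1) (j := 0) one_ne_zero δ

theorem coe_lowerTransvection (δ : R) : (lowerTransvection δ).1 = !![1, 0; δ, 1] := by
  ext i j
  fin_cases i <;> fin_cases j <;> simp [Matrix.SpecialLinearGroup.transvection_coe]

theorem lowerTransvection_smul (δ : R) (w : Fin 2 → R) :
    lowerTransvection δ • w = ![w 0, δ * w 0 + w 1] := by
  rw [Matrix.SpecialLinearGroup.smul_def, coe_lowerTransvection]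
  ext i
  fin_cases i <;> simp [vecHead, vecTail]

theorem eq_of_conj_lowerTransvection {δ ε : R} {w : Fin 2 → R} {P : SL(2, R)}
    (hw : w + P • ![1, 0] = ![1, 0] + lowerTransvection ε • w)
    (hP : P * lowerTransvection δ = lowerTransvection ε * P) : δ = ε := by
  have hP' : P.1 * !![1, 0; δ, 1] = !![1, 0; ε, 1] * P.1 := by
    simpa only [Matrix.SpecialLinearGroup.coe_mul, coe_lowerTransvection] using
      congrArg Subtype.val hP
  have h₀₀ : P.1 0 0 = 1 := by
    rw [lowerTransvection_smul] at hw
    have h₀ : w 0 + P.1 0 0 = 1 + w 0 := by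
      simpa [Matrix.SpecialLinearGroup.smul_def] using congrFun hw 0
    linear_combination h₀
  have hcol : P.1 0 1 * δ = 0 := by simpa [mul_apply] using congrFun₂ hP' 0 0
  have hrow : P.1 1 1 * δ = ε := by
    simpa [mul_apply, h₀₀, add_comm (P.1 1 0)] using congrFun₂ hP' 1 0
  have hdet : P.1 0 0 * P.1 1 1 - P.1 0 1 * P.1 1 0 = 1 := det_fin_two P.1 ▸ P.2
  linear_combination hrow + P.1 1 1 * δ * h₀₀ - P.1 1 0 * hcol - δ * hdet

theorem lowerTransvection_smul_add_ne [Nontrivial R] (δ : R) (w : Fin 2 → R) :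
    lowerTransvection δ • w + ![1, 0] ≠ w := fun h ↦ by
  rw [lowerTransvection_smul] at h
  simpa using congrFun h 0

end Transvection

section FixedPoint

variable {K : Type*} [Field K] {F : SL(2, K)}

theorem exists_specialLinearGroup_smul_eq {v : Fin 2 → K} (hv : v ≠ 0) :
    ∃ P : SL(2, K), P • ![1, 0] = v := by
  have hcop : IsCoprime (v 0) (v 1) := Semifield.isCoprime_iff.2 <| by
    by_contra! h
    exact hv (funext (Fin.forall_fin_two.2 h))
  obtain ⟨P, h₀, h₁⟩ := hcop.exists_SL2_col 0
  refine ⟨P, funext (Fin.forall_fin_two.2 ?_)⟩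
  simp [Matrix.SpecialLinearGroup.smul_def, h₀, h₁]

theorem trace_eq_two_of_forall_smul_add_ne {v : Fin 2 → K} (hF : ∀ w, F • w + v ≠ w) :
    F.1.trace = 2 := by
  by_contra htr
  have hdet : (1 - F.1).det = 2 - F.1.trace := by
    have := F.2
    rw [det_fin_two] at this ⊢
    simp only [trace_fin_two, Matrix.sub_apply, one_apply_eq, one_apply_ne zero_ne_one,
      one_apply_ne one_ne_zero]
    linear_combination this
  have hunit : IsUnit (1 - F.1) := (isUnit_iff_isUnit_det _).2 <| by
    rw [hdet]
    exact (sub_ne_zero.2 (Ne.symm htr)).isUnit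
  obtain ⟨w, hw⟩ := mulVec_surjective_iff_isUnit.2 hunit v
  refine hF w ?_
  rw [← hw, sub_mulVec, one_mulVec, Matrix.SpecialLinearGroup.smul_def, smul_eq_mulVec,
    add_sub_cancel]

theorem exists_conj_lowerTransvection_of_forall_smul_add_single_ne
    (hF : ∀ w, F • w + (![1, 0] : Fin 2 → K) ≠ w) :
    ∃ (δ : K) (P : SL(2, K)), P • (![1, 0] : Fin 2 → K) = ![1, 0] ∧
      P * F = lowerTransvection δ * P := by
  have htr := trace_eq_two_of_forall_smul_add_ne hF
  have hdet := F.2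
  rw [trace_fin_two] at htr
  rw [det_fin_two] at hdet
  have hnil : (F.1 0 0 - 1) ^ 2 = -(F.1 0 1 * F.1 1 0) := by
    linear_combination F.1 0 0 * htr - hdet
  have hzero (hc : F.1 1 0 = 0) : F.1 0 1 = 0 := by
    by_contra hb
    have ha : F.1 0 0 = 1 := by simpa [hc, sub_eq_zero] using hnil
    refine hF ![0, -(F.1 0 1)⁻¹] (funext (Fin.forall_fin_two.2 ?_))
    have hd : F.1 1 1 = 1 := by linear_combination htr - ha
    simp [Matrix.SpecialLinearGroup.smul_def, hb, hd]
  have hdiv : (F.1 0 0 - 1) / F.1 1 0 * F.1 1 0 = F.1 0 0 - 1 :=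
    div_mul_cancel_of_imp fun hc ↦ pow_eq_zero_iff two_ne_zero |>.1 (by simpa [hc] using hnil)
  have hdiv' : (F.1 0 0 - 1) / F.1 1 0 * (F.1 0 0 - 1) = -F.1 0 1 := by
    by_cases hc : F.1 1 0 = 0
    · simp [hc, hzero hc]
    · field_simp
      linear_combination hnil
  -- The shear moves the fixed vector `(F₀₀ - 1, F₁₀)` of `F` to the line spanned by `(0, 1)`; if
  -- `F₁₀ = 0` then `F = 1`, and the division by zero makes `P = 1`.
  obtain ⟨P, hP⟩ : ∃ P : SL(2, K), P.1 = !![1, -((F.1 0 0 - 1) / F.1 1 0); 0, 1] :=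
    ⟨⟨_, by simp [det_fin_two_of]⟩, rfl⟩
  refine ⟨F.1 1 0, P, ?_, Subtype.ext ?_⟩
  · ext i
    fin_cases i <;> simp [Matrix.SpecialLinearGroup.smul_def, hP]
  · rw [Matrix.SpecialLinearGroup.coe_mul, Matrix.SpecialLinearGroup.coe_mul,
      coe_lowerTransvection, hP]
    ext i j
    fin_cases i <;> fin_cases j <;>
      simp only [mul_apply, Fin.sum_univ_two, of_apply, cons_val', cons_val_zero, cons_val_one,
        cons_val_fin_one, Fin.isValue, Fin.zero_eta, Fin.mk_one, zero_mul, one_mul, mul_zero,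
        mul_one, zero_add, add_zero, neg_mul, mul_neg]
    · linear_combination -hdiv
    · linear_combination hdiv' - (F.1 0 0 - 1) / F.1 1 0 * htr
    · linear_combination htr + hdiv

theorem exists_conj_lowerTransvection_of_forall_smul_add_ne {v : Fin 2 → K}
    (hF : ∀ w, F • w + v ≠ w) :
    ∃ (δ : K) (P : SL(2, K)), P • v = ![1, 0] ∧ P * F = lowerTransvection δ * P := by
  obtain ⟨Q, rfl⟩ := exists_specialLinearGroup_smul_eq (v := v) fun hv ↦ hF 0 (by simp [hv])
  obtain ⟨δ, P, hP, hPF⟩ := exists_conj_lowerTransvection_of_forall_smul_add_single_ne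
    (F := Q⁻¹ * F * Q) fun w hw ↦ hF (Q • w) <| by
      calc F • Q • w + Q • ![1, 0]
        _ = Q • ((Q⁻¹ * F * Q) • w + ![1, 0]) := by
          rw [smul_add, ← mul_smul, ← mul_smul, mul_assoc, mul_inv_cancel_left]
        _ = Q • w := by rw [hw]
  refine ⟨δ, P * Q⁻¹, by rw [mul_smul, inv_smul_smul, hP], ?_⟩
  rw [← mul_assoc, ← hPF]
  group

end FixedPoint

namespace SemidirectGroup

variable {p : ℕ} [Fact p.Prime]

/-- The affine map `w ↦ F w + v`, that is the element with translation part `v` and linear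
part `F`. -/
def affine (v : Fin 2 → ZMod p) (F : SL(2, ZMod p)) : SemidirectGroup p :=
  (⟨Multiplicative.ofAdd v, F⟩ : Multiplicative (Fin 2 → ZMod p) ⋊[slAction p] SL(2, ZMod p))

theorem exists_eq_affine (g : SemidirectGroup p) : ∃ v F, g = affine v F :=
  ⟨Multiplicative.toAdd g.left, g.right, rfl⟩

theorem isConj_affine_iff {v v' : Fin 2 → ZMod p} {F F' : SL(2, ZMod p)} :
    IsConj (affine v F) (affine v' F') ↔
      ∃ (w : Fin 2 → ZMod p) (P : SL(2, ZMod p)), w + P • v = v' + F' • w ∧ P * F = F' * P :=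
  semidirectProduct_isConj_iff

theorem isConj_affine_zero_of_smul_add_eq {v w : Fin 2 → ZMod p} {F : SL(2, ZMod p)}
    (h : F • w + v = w) : IsConj (affine 0 F) (affine v F) :=
  isConj_affine_iff.2 ⟨w, 1, by rw [smul_zero, add_zero, add_comm, h], by simp⟩

theorem exists_smul_add_eq_of_isConj_affine_zero {v : Fin 2 → ZMod p} {F F' : SL(2, ZMod p)}
    (h : IsConj (affine 0 F) (affine v F')) : ∃ w, F' • w + v = w := by
  obtain ⟨w, P, hw, -⟩ := isConj_affine_iff.1 h
  exact ⟨w, by simpa [add_comm] using hw.symm⟩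

/-- The classes of the linear maps, which are those with a fixed point, followed by the classes
of the maps `w ↦ lowerTransvection δ • w + (1, 0)`. -/
noncomputable def classRep : ConjClasses SL(2, ZMod p) ⊕ ZMod p → ConjClasses (SemidirectGroup p) :=
  Sum.elim
    (ConjClasses.map (SemidirectProduct.inr :
      SL(2, ZMod p) →* Multiplicative (Fin 2 → ZMod p) ⋊[slAction p] SL(2, ZMod p)))
    (fun δ ↦ ConjClasses.mk (affine ![1, 0] (lowerTransvection δ)))

theorem classRep_injective : Function.Injective (classRep (p := p)) := by
  refine .sumElim conjClasses_map_inr_injective (fun δ ε h ↦ ?_) ?_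
  · obtain ⟨w, P, hw, hP⟩ := isConj_affine_iff.1 (ConjClasses.mk_eq_mk_iff_isConj.1 h)
    exact eq_of_conj_lowerTransvection hw hP
  · rintro ⟨F⟩ δ h
    obtain ⟨w, hw⟩ := exists_smul_add_eq_of_isConj_affine_zero (ConjClasses.mk_eq_mk_iff_isConj.1 h)
    exact lowerTransvection_smul_add_ne δ w hw

theorem classRep_surjective : Function.Surjective (classRep (p := p)) := by
  rintro ⟨g⟩
  obtain ⟨v, F, rfl⟩ := exists_eq_affine g
  by_cases hfix : ∃ w, F • w + v = w
  · obtain ⟨w, hw⟩ := hfix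
    exact ⟨.inl (ConjClasses.mk F),
      ConjClasses.mk_eq_mk_iff_isConj.2 (isConj_affine_zero_of_smul_add_eq hw)⟩
  · obtain ⟨δ, P, hPv, hPF⟩ :=
      exists_conj_lowerTransvection_of_forall_smul_add_ne (not_exists.1 hfix)
    have hconj : IsConj (affine v F) (affine ![1, 0] (lowerTransvection δ)) :=
      isConj_affine_iff.2 ⟨0, P, by rw [zero_add, hPv, smul_zero, add_zero], hPF⟩
    exact ⟨.inr δ, ConjClasses.mk_eq_mk_iff_isConj.2 hconj.symm⟩

theorem card_conjClasses :
    Nat.card (ConjClasses (SemidirectGroup p)) = Nat.card (ConjClasses SL(2, ZMod p)) + p := by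
  rw [← Nat.card_eq_of_bijective _ ⟨classRep_injective, classRep_surjective⟩, Nat.card_sum,
    Nat.card_zmod]

end SemidirectGroup

theorem ququint_clifford_fourteen_conjugacy_classes_general (p : ℕ) [Fact p.Prime] (hp : p ≠ 2) :
    Nat.card (ConjClasses (SemidirectGroup p)) = 2 * p + 4 := by
  have hchar : ringChar (ZMod p) ≠ 2 := by rwa [ZMod.ringChar_zmod_n]
  rw [SemidirectGroup.card_conjClasses, card_conjClasses_specialLinearGroup_fin_two hchar,
    Nat.card_zmod]
  ring

theorem ququint_clifford_fourteen_conjugacy_classes :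
    Nat.card (ConjClasses (SemidirectGroup 5)) = 14 :=
  ququint_clifford_fourteen_conjugacy_classes_general 5 (by norm_num)
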